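/- Let $\mathbb{F}_{97}$ be the field with $97$ elements, $f_1 = x^4 + 8x^3 + 3x^2 + 23x + 1$ and $f_2 = x^4 + 9x^3 + 63x^2 + 28x + 91$ in $\mathbb{F}_{97}[x]$. Then $\#\{(x, y_1, y_2) \in \mathbb{F}_{97}^3 : y_1^2 = f_1(x) \text{ and } y_2^2 = f_2(x)\} = 176$. -/

import Mathlib

/-!
The fibre of the curve over `x` is the product of the two sets of square roots of `f₁(x)` and
`f₂(x)`, so the count is `∑ₓ r(f₁(x)) r(f₂(x))`, where `r(a)` is the number of square roots of `a`.
By Euler's criterion `r(a)` is `1` if `a = 0`, `2` if `a ^ 48 = 1`, and `0` otherwise. Taking the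
representatives `0, …, 96` of `x` turns the sum into one over natural numbers, which is evaluated.
-/

/-- The number of square roots of `n` modulo `97`, as given by Euler's criterion. -/
def rootCount (n : ℕ) : ℕ :=
  if n % 97 = 0 then 1 else if (n % 97) ^ 48 % 97 = 1 then 2 else 0

lemma card_sqrt_natCast (n : ℕ) :
    Nat.card {y : ZMod 97 // y ^ 2 = (n : ZMod 97)} = rootCount n := by
  have : Fact (Nat.Prime 97) := ⟨by norm_num⟩
  have h := quadraticChar_card_sqrts (F := ZMod 97) (by rw [ZMod.ringChar_zmod_n]; norm_num)
    (n : ZMod 97)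
  have hc : Nat.card {y : ZMod 97 // y ^ 2 = (n : ZMod 97)}
      = {x : ZMod 97 | x ^ 2 = (n : ZMod 97)}.toFinset.card := by
    rw [← Nat.card_eq_card_toFinset]; rfl
  rw [← hc] at h
  have h0 : (n : ZMod 97) = 0 ↔ n % 97 = 0 := by
    rw [ZMod.natCast_eq_zero_iff, Nat.dvd_iff_mod_eq_zero]
  have h1 : (n : ZMod 97) ^ 48 = 1 ↔ (n % 97) ^ 48 % 97 = 1 := by
    rw [← Nat.pow_mod, ← Nat.cast_pow, ← Nat.cast_one, ZMod.natCast_eq_natCast_iff']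
  unfold rootCount
  by_cases hn : n % 97 = 0
  · rw [h0.2 hn, quadraticChar_zero] at h
    rw [if_pos hn, h0.2 hn]
    omega
  · have hn' : (n : ZMod 97) ≠ 0 := fun e => hn (h0.1 e)
    rw [if_neg hn]
    have euler : IsSquare (n : ZMod 97) ↔ (n : ZMod 97) ^ 48 = 1 := ZMod.euler_criterion 97 hn'
    by_cases hs : IsSquare (n : ZMod 97)
    · rw [(quadraticChar_one_iff_isSquare hn').2 hs] at h
      rw [if_pos (h1.1 (euler.1 hs))]
      omega
    · rw [quadraticChar_neg_one_iff_not_isSquare.2 hs] at h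
      rw [if_neg fun e => hs (euler.2 (h1.2 e))]
      omega

/-- Affine point count of the fibre product curve `y₁² = f₁(x)`, `y₂² = f₂(x)`. -/
theorem affine_point_count_13 :
    Nat.card {p : (ZMod 97) × (ZMod 97) × (ZMod 97) |
      p.2.1 ^ 2 = p.1^4 + 8*p.1^3 + 3*p.1^2 + 23*p.1 + 1 ∧
      p.2.2 ^ 2 = p.1^4 + 9*p.1^3 + 63*p.1^2 + 28*p.1 + 91} = 176 := by
  let e : {p : (ZMod 97) × (ZMod 97) × (ZMod 97) |
      p.2.1 ^ 2 = p.1^4 + 8*p.1^3 + 3*p.1^2 + 23*p.1 + 1 ∧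
      p.2.2 ^ 2 = p.1^4 + 9*p.1^3 + 63*p.1^2 + 28*p.1 + 91} ≃
      Σ x : ZMod 97, {y : ZMod 97 // y ^ 2 = x^4 + 8*x^3 + 3*x^2 + 23*x + 1} ×
        {y : ZMod 97 // y ^ 2 = x^4 + 9*x^3 + 63*x^2 + 28*x + 91} :=
    { toFun := fun p => ⟨p.1.1, ⟨p.1.2.1, p.2.1⟩, ⟨p.1.2.2, p.2.2⟩⟩
      invFun := fun q => ⟨(q.1, q.2.1.1, q.2.2.1), q.2.1.2, q.2.2.2⟩
      left_inv := fun _ => rfl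
      right_inv := fun _ => rfl }
  rw [Nat.card_congr e, Nat.card_sigma]
  have key : ∀ x : ZMod 97,
      Nat.card ({y : ZMod 97 // y ^ 2 = x^4 + 8*x^3 + 3*x^2 + 23*x + 1} ×
        {y : ZMod 97 // y ^ 2 = x^4 + 9*x^3 + 63*x^2 + 28*x + 91}) =
      rootCount (x.val^4 + 8*x.val^3 + 3*x.val^2 + 23*x.val + 1) *
        rootCount (x.val^4 + 9*x.val^3 + 63*x.val^2 + 28*x.val + 91) := by
    intro x
    rw [Nat.card_prod, ← card_sqrt_natCast, ← card_sqrt_natCast]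
    push_cast
    rw [ZMod.natCast_zmod_val]
  rw [Finset.sum_congr rfl fun x _ => key x]
  -- `ZMod 97` is `Fin 97` by definition, with `ZMod.val` the coercion to `ℕ`.
  refine (Fin.sum_univ_eq_sum_range (fun n : ℕ =>
    rootCount (n^4 + 8*n^3 + 3*n^2 + 23*n + 1) *
      rootCount (n^4 + 9*n^3 + 63*n^2 + 28*n + 91)) 97).trans ?_
  decide +kernel
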